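/- Fix α ∈ (0, 1/16). For every integer ℓ ≥ 2 satisfying log₂ℓ / log₂log₂ℓ ≥ 1/α, the fraction of matrices K ∈ GL(ℓ,F₂) such that λ_{α,K}(z) < ℓ^{−1/2 + 5α} holds for all z ∈ [1/ℓ², 1 − 1/ℓ²] is strictly greater than 1 − 1/ℓ. -/

import Mathlib

/-!
The number `ℓ - |S|` of unerased coordinates is the dimension of the punctured space, so bit `i`
(0-indexed) of a random kernel becomes undecodable as `|S|` passes `i`: for uniform
`K ∈ GL(ℓ, F₂)` it is undecodable with probability at most `2^(|S| - i)`
(`card_not_decodable_le`) and decodable with probability at most `2^(i + 1 - |S|)`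
(`card_decodable_le`). Both are union bounds over a nonzero vector witnessing the event, using that
`v K` and `K v` are uniform on nonzero vectors for `v ≠ 0`.

All these events are collected, with weights inverse to their probabilities, in one random
variable, `deviation`. Its mean is at most `3 ℓ (ℓ + 1)`, so by Markov's inequality it is below
`ℓ^4` on more than a fraction `1 - 1/ℓ` of the kernels. It does not involve `z`, so no union bound
over `z` is needed.

For such a kernel, the fraction of undecodable sets of size `s` is at most
`min 1 (ℓ^4 2^(s - i))`, and averaging a small power of this bound over the binomial law of `|S|`
gives `f_{K,i}(z) ≤ exp (2 - (i - ℓz)/√ℓ)`, and symmetrically for `1 - f_{K,i}(z)` (`fK_sharp`).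
Hence `g_α(f_{K,i}(z)) ≤ 2 exp (-α |i - ℓz| / √ℓ)`, and a geometric sum over `i` is at most
`8 √ℓ / α`. The condition on `ℓ` means `log₂ ℓ ≤ ℓ^α`, which makes `8 / α < ℓ^(2α)`, and
`g_α(z) ≥ ℓ^(-3α)` on the given range of `z`.
-/

open scoped Classical

noncomputable section

/-- Bit `i` (0-indexed; it represents the 1-indexed bit `i+1`) is decodable under the
kernel `K` and the erasure set `S`. -/
def Decodable (ℓ : ℕ) (K : Matrix (Fin ℓ) (Fin ℓ) (ZMod 2)) (i : Fin ℓ)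
    (S : Finset (Fin ℓ)) : Prop :=
  ∀ u u' : Fin ℓ → ZMod 2,
    (∀ j : Fin ℓ, j < i → u j = u' j) →
    (∀ j : Fin ℓ, j ∉ S → Matrix.vecMul u K j = Matrix.vecMul u' K j) →
    u i = u' i

/-- The polarization behavior `f_{K,i}(z)` of the kernel `K`. -/
def fK (ℓ : ℕ) (K : Matrix (Fin ℓ) (Fin ℓ) (ZMod 2)) (i : Fin ℓ) (z : ℝ) : ℝ :=
  ∑ S : Finset (Fin ℓ),
    if ¬ Decodable ℓ K i S then z ^ S.card * (1 - z) ^ (ℓ - S.card) else 0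

/-- The polarization process `Z_m(z, b)`. -/
def Zproc (ℓ : ℕ) (K : Matrix (Fin ℓ) (Fin ℓ) (ZMod 2)) (z : ℝ) :
    (m : ℕ) → (Fin m → Fin ℓ) → ℝ
  | 0, _ => z
  | m + 1, b => fK ℓ K (b (Fin.last m)) (Zproc ℓ K z m (fun j => b j.castSucc))

/-- `g_α(z) = z^α (1-z)^α`. -/
def gfun (α z : ℝ) : ℝ := z ^ α * (1 - z) ^ α

/-- `λ_{α,K}(z)`. -/
def lam (ℓ : ℕ) (K : Matrix (Fin ℓ) (Fin ℓ) (ZMod 2)) (α z : ℝ) : ℝ :=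
  ((1 / (ℓ : ℝ)) * ∑ i : Fin ℓ, gfun α (fK ℓ K i z)) / gfun α z

/-- `λ*_{α,K} = sup_{z ∈ (0,1)} λ_{α,K}(z)`. -/
def lamStar (ℓ : ℕ) (K : Matrix (Fin ℓ) (Fin ℓ) (ZMod 2)) (α : ℝ) : ℝ :=
  sSup (lam ℓ K α '' Set.Ioo 0 1)

/-- `E_z[h(Z_m)]`, the uniform average over branch sequences `b`. -/
def expZ (ℓ : ℕ) (K : Matrix (Fin ℓ) (Fin ℓ) (ZMod 2)) (z : ℝ) (m : ℕ) (h : ℝ → ℝ) : ℝ :=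
  (∑ b : Fin m → Fin ℓ, h (Zproc ℓ K z m b)) / (ℓ : ℝ) ^ m


/-- The fraction of matrices `K ∈ GL(ℓ, F₂)` satisfying the property `P`. -/
def fracGL (ℓ : ℕ) (P : Matrix.GeneralLinearGroup (Fin ℓ) (ZMod 2) → Prop) : ℝ :=
  ((Finset.univ.filter P).card : ℝ) /
    (Fintype.card (Matrix.GeneralLinearGroup (Fin ℓ) (ZMod 2)) : ℝ)

/-! ### Random invertible matrices over `F₂` -/

/-- `GL(ℓ, F₂)` acts transitively on nonzero vectors. -/
lemma exists_GL_mulVec_eq {ℓ : ℕ} {w w' : Fin ℓ → ZMod 2} (hw : w ≠ 0) (hw' : w' ≠ 0) :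
    ∃ g : Matrix.GeneralLinearGroup (Fin ℓ) (ZMod 2),
      (g : Matrix (Fin ℓ) (Fin ℓ) (ZMod 2)).mulVec w = w' := by
  let f := (LinearEquiv.toSpanNonzeroSingleton (ZMod 2) _ w hw).symm ≪≫ₗ
    (LinearEquiv.toSpanNonzeroSingleton (ZMod 2) _ w' hw')
  obtain ⟨g, hg⟩ := Submodule.exists_linearEquiv_restrict_eq f
  have h := hg ⟨w, Submodule.mem_span_singleton_self w⟩
  have h1 : (f ⟨w, Submodule.mem_span_singleton_self w⟩ : Fin ℓ → ZMod 2) = w' := by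
    have : (LinearEquiv.toSpanNonzeroSingleton (ZMod 2) _ w hw).symm
        ⟨w, Submodule.mem_span_singleton_self w⟩ = 1 := by
      rw [LinearEquiv.symm_apply_eq]
      ext; simp
    simp [f, this]
  rw [h1] at h
  refine ⟨Matrix.GeneralLinearGroup.mk'' (LinearMap.toMatrix' g.toLinearMap) ?_, ?_⟩
  · exact LinearEquiv.isUnit_det' g |> fun h => by rwa [← LinearMap.det_toMatrix'] at h
  · change (LinearMap.toMatrix' g.toLinearMap).mulVec w = w'
    rw [LinearMap.toMatrix'_mulVec]
    exact h.symm

/-- For fixed `v ≠ 0` and uniform `K`, the vector `K v` is uniform on the nonzero vectors, so it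
hits `W` with probability at most `|W| / 2^ℓ`. -/
lemma card_mulVec_mem_le {ℓ : ℕ} {v : Fin ℓ → ZMod 2} (hv : v ≠ 0)
    (W : Finset (Fin ℓ → ZMod 2)) (hW : 0 ∈ W) :
    (Finset.univ.filter fun K : Matrix.GeneralLinearGroup (Fin ℓ) (ZMod 2) =>
        (K : Matrix (Fin ℓ) (Fin ℓ) (ZMod 2)).mulVec v ∈ W).card * 2 ^ ℓ ≤
      Fintype.card (Matrix.GeneralLinearGroup (Fin ℓ) (ZMod 2)) * W.card := by
  set φ : Matrix.GeneralLinearGroup (Fin ℓ) (ZMod 2) → (Fin ℓ → ZMod 2) :=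
    fun K => (K : Matrix (Fin ℓ) (Fin ℓ) (ZMod 2)).mulVec v with hφ
  have hne : ∀ K, φ K ≠ 0 := by
    intro K h
    apply hv
    have h2 : (K⁻¹ : Matrix.GeneralLinearGroup (Fin ℓ) (ZMod 2)).1.mulVec (φ K) = v := by
      simp only [hφ]
      rw [Matrix.mulVec_mulVec, ← Units.val_mul, inv_mul_cancel, Units.val_one, Matrix.one_mulVec]
    rw [← h2, h, Matrix.mulVec_zero]
  have hfib : ∀ w w', w ≠ 0 → w' ≠ 0 →
      (Finset.univ.filter fun K => φ K = w).card ≤ (Finset.univ.filter fun K => φ K = w').card := by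
    intro w w' hw hw'
    obtain ⟨g, hg⟩ := exists_GL_mulVec_eq hw hw'
    refine Finset.card_le_card_of_injOn (fun K => g * K) ?_ (fun a _ b _ h => mul_left_cancel h)
    intro K hK
    simp only [Finset.coe_filter, Finset.mem_univ, true_and, Set.mem_ofPred_eq, hφ] at hK ⊢
    rw [Units.val_mul, ← Matrix.mulVec_mulVec, hK, hg]
  set f := (Finset.univ.filter fun K => φ K = v).card with hf
  have hfib' : ∀ w, w ≠ 0 → (Finset.univ.filter fun K => φ K = w).card = f :=
    fun w hw => le_antisymm (hfib _ _ hw hv) (hfib _ _ hv hw)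
  have key : ∀ U : Finset (Fin ℓ → ZMod 2), 0 ∈ U →
      (Finset.univ.filter fun K => φ K ∈ U).card = (U.card - 1) * f := by
    intro U hU
    have h1 : (Finset.univ.filter fun K => φ K ∈ U) =
        (Finset.univ.filter fun K => φ K ∈ U.erase 0) := by
      ext K; simp [hne K]
    rw [h1, Finset.card_eq_sum_card_fiberwise (f := φ) (t := U.erase 0)
      (fun K hK => by simpa [and_comm] using hK), ← Finset.card_erase_of_mem hU, ← smul_eq_mul,
      ← Finset.sum_const]
    refine Finset.sum_congr rfl fun w hw => ?_
    rw [← hfib' w (Finset.ne_of_mem_erase hw), Finset.filter_filter]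
    congr 1
    ext K
    simp only [Finset.mem_filter, Finset.mem_univ, true_and]
    constructor
    · exact fun h => h.2
    · exact fun h => ⟨h ▸ hw, h⟩
  have hN := key Finset.univ (Finset.mem_univ _)
  have hcW := key W hW
  simp only [Finset.mem_univ, Finset.filter_true, Finset.card_univ, Fintype.card_fun, ZMod.card,
    Fintype.card_fin] at hN
  have hle : (Finset.univ.filter fun K => φ K ∈ W).card ≤
      Fintype.card (Matrix.GeneralLinearGroup (Fin ℓ) (ZMod 2)) := Finset.card_le_univ _
  obtain ⟨m, hm⟩ : ∃ m, W.card = m + 1 :=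
    ⟨W.card - 1, by have := Finset.card_pos.2 ⟨0, hW⟩; omega⟩
  obtain ⟨k, hk⟩ : ∃ k, 2 ^ ℓ = k + 1 := ⟨2 ^ ℓ - 1, by
    have := Nat.pos_of_ne_zero (pow_ne_zero ℓ (two_ne_zero (α := ℕ))); omega⟩
  rw [hm, Nat.add_sub_cancel] at hcW
  rw [hk, Nat.add_sub_cancel] at hN
  rw [hm, hk]
  calc _ = (m * f) * k + (Finset.univ.filter fun K => φ K ∈ W).card := by rw [hcW]; ring
    _ ≤ (m * f) * k + Fintype.card (Matrix.GeneralLinearGroup (Fin ℓ) (ZMod 2)) := by omega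
    _ = _ := by rw [hN]; ring

/-- The row-vector version of `card_mulVec_mem_le`, by transposition. -/
lemma card_vecMul_mem_le {ℓ : ℕ} {v : Fin ℓ → ZMod 2} (hv : v ≠ 0)
    (W : Finset (Fin ℓ → ZMod 2)) (hW : 0 ∈ W) :
    (Finset.univ.filter fun K : Matrix.GeneralLinearGroup (Fin ℓ) (ZMod 2) =>
        Matrix.vecMul v (K : Matrix (Fin ℓ) (Fin ℓ) (ZMod 2)) ∈ W).card * 2 ^ ℓ ≤
      Fintype.card (Matrix.GeneralLinearGroup (Fin ℓ) (ZMod 2)) * W.card := by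
  refine le_trans (Nat.mul_le_mul_right _ ?_) (card_mulVec_mem_le hv W hW)
  refine Finset.card_le_card_of_injOn
    (fun K => Matrix.GeneralLinearGroup.mk'' K.1.transpose (by
      rw [Matrix.det_transpose]; exact (Matrix.isUnit_iff_isUnit_det _).1 K.isUnit)) ?_ ?_
  · intro K hK
    simp only [Finset.coe_filter, Finset.mem_univ, true_and, Set.mem_ofPred_eq] at hK ⊢
    change K.1.transpose.mulVec v ∈ W
    rwa [Matrix.mulVec_transpose]
  · intro K _ K' _ h
    have htr : K.1.transpose = K'.1.transpose := congrArg Units.val h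
    exact Units.ext (Matrix.transpose_injective htr)

/-- The vectors vanishing outside `S`. -/
def suppIn {ℓ : ℕ} (S : Finset (Fin ℓ)) : Finset (Fin ℓ → ZMod 2) :=
  Finset.univ.filter fun v => ∀ j, j ∉ S → v j = 0

lemma mem_suppIn {ℓ : ℕ} {S : Finset (Fin ℓ)} {v : Fin ℓ → ZMod 2} :
    v ∈ suppIn S ↔ ∀ j, j ∉ S → v j = 0 := by simp [suppIn]

lemma card_suppIn {ℓ : ℕ} (S : Finset (Fin ℓ)) : (suppIn S).card = 2 ^ S.card := by
  have : suppIn S = Fintype.piFinset fun j => if j ∈ S then Finset.univ else {0} := by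
    ext v
    rw [mem_suppIn, Fintype.mem_piFinset]
    refine forall_congr' fun j => ?_
    by_cases h : j ∈ S <;> simp [h]
  rw [this, Fintype.card_piFinset]
  simp [apply_ite]

/-! ### Decodability of a random kernel -/

lemma exists_of_not_decodable {ℓ : ℕ} {K : Matrix (Fin ℓ) (Fin ℓ) (ZMod 2)} {i : Fin ℓ}
    {S : Finset (Fin ℓ)} (h : ¬ Decodable ℓ K i S) :
    ∃ v ∈ (suppIn (Finset.Ici i)).erase 0, Matrix.vecMul v K ∈ suppIn S := by
  unfold Decodable at h
  push Not at h
  obtain ⟨u, u', h1, h2, h3⟩ := h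
  refine ⟨u - u', Finset.mem_erase.2 ⟨fun h => h3 ?_, mem_suppIn.2 fun j hj => ?_⟩,
    mem_suppIn.2 fun j hj => ?_⟩
  · exact sub_eq_zero.1 (congrFun h i)
  · rw [Pi.sub_apply, h1 j (by simpa using hj), sub_self]
  · rw [Matrix.sub_vecMul, Pi.sub_apply, h2 j hj, sub_self]

/-- If bit `i` is decodable, then row `i` of `K`, punctured on `S`, is not a combination of the
later punctured rows. These therefore do not span, and some nonzero `w` supported off `S` is
orthogonal to all rows after `i`. -/
lemma exists_of_decodable {ℓ : ℕ} {K : Matrix (Fin ℓ) (Fin ℓ) (ZMod 2)} {i : Fin ℓ}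
    {S : Finset (Fin ℓ)} (h : Decodable ℓ K i S) :
    ∃ w ∈ (suppIn Sᶜ).erase 0, K.mulVec w ∈ suppIn (Finset.Iic i) := by
  let p : Submodule (ZMod 2) (Fin ℓ → ZMod 2) :=
    { carrier := {y | ∃ u : Fin ℓ → ZMod 2, (∀ j ≤ i, u j = 0) ∧
        ∀ j ∉ S, Matrix.vecMul u K j = y j}
      add_mem' := by
        rintro a b ⟨u, hu, hu'⟩ ⟨v, hv, hv'⟩
        refine ⟨u + v, fun j hj => by simp [hu j hj, hv j hj], fun j hj => ?_⟩
        rw [Matrix.add_vecMul, Pi.add_apply, Pi.add_apply, hu' j hj, hv' j hj]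
      zero_mem' := ⟨0, by simp, by simp⟩
      smul_mem' := by
        rintro c a ⟨u, hu, hu'⟩
        refine ⟨c • u, fun j hj => by simp [hu j hj], fun j hj => ?_⟩
        rw [Matrix.smul_vecMul, Pi.smul_apply, Pi.smul_apply, hu' j hj] }
  have hp : p < ⊤ := by
    rw [lt_top_iff_ne_top]
    intro htop
    have hmem : K i ∈ p := htop ▸ Submodule.mem_top
    obtain ⟨u, hu, hu'⟩ := hmem
    have := h (Pi.single i 1) u (fun j hj => by
      rw [hu j hj.le, Pi.single_eq_of_ne hj.ne]) (fun j hj => by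
      rw [hu' j hj, Matrix.single_one_vecMul]; rfl)
    rw [hu i le_rfl, Pi.single_eq_same] at this
    exact one_ne_zero this
  obtain ⟨f, hf0, hf⟩ := Submodule.exists_le_ker_of_lt_top p hp
  have hfs : ∀ y, f y = y ⬝ᵥ fun j => f (Pi.single j 1) := by
    intro y
    rw [LinearMap.pi_apply_eq_sum_univ f y]
    simp only [dotProduct, smul_eq_mul]
    refine Finset.sum_congr rfl fun j _ => ?_
    congr 2
    ext k
    simp [Pi.single_apply, eq_comm]
  refine ⟨fun j => f (Pi.single j 1), Finset.mem_erase.2 ⟨fun h0 => hf0 ?_,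
    mem_suppIn.2 fun j hj => ?_⟩, mem_suppIn.2 fun j hj => ?_⟩
  · ext y
    simpa using congrFun h0 y
  · refine LinearMap.mem_ker.1 (hf ⟨0, by simp, fun k hk => ?_⟩)
    have hjk : k ≠ j := by
      rintro rfl; exact hj (Finset.mem_compl.2 hk)
    simp [Pi.single_eq_of_ne hjk]
  · change K j ⬝ᵥ (fun j => f (Pi.single j 1)) = 0
    rw [← hfs]
    refine LinearMap.mem_ker.1 (hf ⟨Pi.single j 1, fun k hk => ?_, fun k _ => ?_⟩)
    · refine Pi.single_eq_of_ne ?_ _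
      rintro rfl; exact hj (Finset.mem_Iic.2 hk)
    · rw [Matrix.single_one_vecMul]; rfl

/-- The union bound over `v ∈ A`, for a random image `φ K v` that hits `W` with probability at most
`|W| / 2^ℓ`. -/
lemma card_exists_le {ℓ : ℕ} (A W : Finset (Fin ℓ → ZMod 2))
    (φ : Matrix.GeneralLinearGroup (Fin ℓ) (ZMod 2) → (Fin ℓ → ZMod 2) → (Fin ℓ → ZMod 2))
    (hφ : ∀ v, v ≠ 0 → (Finset.univ.filter fun K => φ K v ∈ W).card * 2 ^ ℓ ≤
      Fintype.card (Matrix.GeneralLinearGroup (Fin ℓ) (ZMod 2)) * W.card) :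
    (Finset.univ.filter fun K => ∃ v ∈ A.erase 0, φ K v ∈ W).card * 2 ^ ℓ ≤
      Fintype.card (Matrix.GeneralLinearGroup (Fin ℓ) (ZMod 2)) * (A.card * W.card) := by
  have h1 : (Finset.univ.filter fun K => ∃ v ∈ A.erase 0, φ K v ∈ W) ⊆
      (A.erase 0).biUnion fun v => Finset.univ.filter fun K => φ K v ∈ W := by
    intro K hK
    simpa using hK
  calc _ ≤ (∑ v ∈ A.erase 0, (Finset.univ.filter fun K => φ K v ∈ W).card) * 2 ^ ℓ :=
        Nat.mul_le_mul_right _ ((Finset.card_le_card h1).trans Finset.card_biUnion_le)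
    _ = ∑ v ∈ A.erase 0, (Finset.univ.filter fun K => φ K v ∈ W).card * 2 ^ ℓ := by
        rw [Finset.sum_mul]
    _ ≤ ∑ v ∈ A.erase 0,
          Fintype.card (Matrix.GeneralLinearGroup (Fin ℓ) (ZMod 2)) * W.card :=
        Finset.sum_le_sum fun v hv => hφ v (Finset.ne_of_mem_erase hv)
    _ = (A.erase 0).card *
          (Fintype.card (Matrix.GeneralLinearGroup (Fin ℓ) (ZMod 2)) * W.card) := by
        rw [Finset.sum_const, smul_eq_mul]
    _ ≤ A.card * (Fintype.card (Matrix.GeneralLinearGroup (Fin ℓ) (ZMod 2)) * W.card) :=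
        Nat.mul_le_mul_right _ (Finset.card_le_card (Finset.erase_subset _ _))
    _ = _ := by ring

/-- Bit `i` is undecodable from `|S|` erasures with probability at most `2^(|S| - i)`. -/
lemma card_not_decodable_le {ℓ : ℕ} (i : Fin ℓ) (S : Finset (Fin ℓ)) :
    ((Finset.univ.filter fun K : Matrix.GeneralLinearGroup (Fin ℓ) (ZMod 2) =>
        ¬ Decodable ℓ K.1 i S).card : ℝ) * (2 ^ (i : ℕ) / 2 ^ S.card) ≤
      Fintype.card (Matrix.GeneralLinearGroup (Fin ℓ) (ZMod 2)) := by
  have h := card_exists_le (suppIn (Finset.Ici i)) (suppIn S)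
    (fun K v => Matrix.vecMul v K.1)
    (fun v hv => card_vecMul_mem_le hv _ (mem_suppIn.2 fun _ _ => rfl))
  have h0 : (Finset.univ.filter fun K : Matrix.GeneralLinearGroup (Fin ℓ) (ZMod 2) =>
        ¬ Decodable ℓ K.1 i S).card ≤ _ :=
    Finset.card_le_card (Finset.monotone_filter_right Finset.univ
      fun K _ hK => exists_of_not_decodable hK)
  have h' := (Nat.mul_le_mul_right _ h0).trans h
  rw [card_suppIn, card_suppIn, Fin.card_Ici] at h'
  have hl : 2 ^ ℓ = 2 ^ (ℓ - i) * 2 ^ (i : ℕ) := by rw [← pow_add, Nat.sub_add_cancel i.2.le]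
  rw [hl] at h'
  have hfin : (Finset.univ.filter fun K : Matrix.GeneralLinearGroup (Fin ℓ) (ZMod 2) =>
        ¬ Decodable ℓ K.1 i S).card * 2 ^ (i : ℕ) ≤
      Fintype.card (Matrix.GeneralLinearGroup (Fin ℓ) (ZMod 2)) * 2 ^ S.card := by
    refine Nat.le_of_mul_le_mul_left ?_ (pow_pos two_pos (ℓ - i))
    linarith
  rw [← mul_div_assoc, div_le_iff₀ (by positivity)]
  exact_mod_cast hfin

/-- Bit `i` is decodable from `|S|` erasures with probability at most `2^(i + 1 - |S|)`. -/
lemma card_decodable_le {ℓ : ℕ} (i : Fin ℓ) (S : Finset (Fin ℓ)) :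
    ((Finset.univ.filter fun K : Matrix.GeneralLinearGroup (Fin ℓ) (ZMod 2) =>
        Decodable ℓ K.1 i S).card : ℝ) * (2 ^ S.card / 2 ^ (i : ℕ)) ≤
      2 * Fintype.card (Matrix.GeneralLinearGroup (Fin ℓ) (ZMod 2)) := by
  have h := card_exists_le (suppIn Sᶜ) (suppIn (Finset.Iic i))
    (fun K v => K.1.mulVec v)
    (fun v hv => card_mulVec_mem_le hv _ (mem_suppIn.2 fun _ _ => rfl))
  have h0 : (Finset.univ.filter fun K : Matrix.GeneralLinearGroup (Fin ℓ) (ZMod 2) =>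
        Decodable ℓ K.1 i S).card ≤ _ :=
    Finset.card_le_card (Finset.monotone_filter_right Finset.univ
      fun K _ hK => exists_of_decodable hK)
  have h' := (Nat.mul_le_mul_right _ h0).trans h
  have hS : S.card ≤ ℓ := by simpa using Finset.card_le_univ S
  rw [card_suppIn, card_suppIn, Fin.card_Iic, Finset.card_compl, Fintype.card_fin] at h'
  have hl : 2 ^ ℓ = 2 ^ (ℓ - S.card) * 2 ^ S.card := by rw [← pow_add, Nat.sub_add_cancel hS]
  rw [hl] at h'
  have hfin : (Finset.univ.filter fun K : Matrix.GeneralLinearGroup (Fin ℓ) (ZMod 2) =>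
        Decodable ℓ K.1 i S).card * 2 ^ S.card ≤
      2 * Fintype.card (Matrix.GeneralLinearGroup (Fin ℓ) (ZMod 2)) * 2 ^ (i : ℕ) := by
    refine Nat.le_of_mul_le_mul_left ?_ (pow_pos two_pos (ℓ - S.card))
    rw [pow_succ] at h'
    linarith
  rw [← mul_div_assoc, div_le_iff₀ (by positivity)]
  exact_mod_cast hfin

/-- The deviation of `K` from sharp threshold behavior: each pair `(i, S)` with `S` undecodable
costs `2^(i - |S|)` and each decodable pair costs `2^(|S| - i)`, averaged over the sets `S` of each
size. -/
def deviation (ℓ : ℕ) (K : Matrix (Fin ℓ) (Fin ℓ) (ZMod 2)) : ℝ :=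
  ∑ i : Fin ℓ, ∑ S : Finset (Fin ℓ), (1 / (ℓ.choose S.card : ℝ)) *
    ((if ¬ Decodable ℓ K i S then (2 : ℝ) ^ (i : ℕ) / 2 ^ S.card else 0) +
      (if Decodable ℓ K i S then (2 : ℝ) ^ S.card / 2 ^ (i : ℕ) else 0))

lemma sum_one_div_choose (ℓ : ℕ) :
    ∑ S : Finset (Fin ℓ), (1 / (ℓ.choose S.card : ℝ)) = ℓ + 1 := by
  have h := Finset.sum_powerset_apply_card (fun k => (1 / (ℓ.choose k : ℝ)))
    (x := (Finset.univ : Finset (Fin ℓ)))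
  rw [Finset.powerset_univ, Finset.card_univ, Fintype.card_fin] at h
  rw [h, Finset.sum_congr rfl (g := fun _ => (1 : ℝ))]
  · simp
  · intro k hk
    have : (ℓ.choose k : ℝ) ≠ 0 := by
      exact_mod_cast (Nat.choose_pos (by simpa [Nat.lt_succ_iff] using hk)).ne'
    rw [nsmul_eq_mul]
    field_simp

lemma sum_deviation_le (ℓ : ℕ) :
    ∑ K : Matrix.GeneralLinearGroup (Fin ℓ) (ZMod 2), deviation ℓ K.1 ≤
      3 * ℓ * (ℓ + 1) * Fintype.card (Matrix.GeneralLinearGroup (Fin ℓ) (ZMod 2)) := by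
  set N : ℝ := (Fintype.card (Matrix.GeneralLinearGroup (Fin ℓ) (ZMod 2)) : ℝ) with hN
  unfold deviation
  rw [Finset.sum_comm]
  have hi : ∀ i : Fin ℓ, ∑ K : Matrix.GeneralLinearGroup (Fin ℓ) (ZMod 2),
      ∑ S : Finset (Fin ℓ), (1 / (ℓ.choose S.card : ℝ)) *
        ((if ¬ Decodable ℓ K.1 i S then (2 : ℝ) ^ (i : ℕ) / 2 ^ S.card else 0) +
          (if Decodable ℓ K.1 i S then (2 : ℝ) ^ S.card / 2 ^ (i : ℕ) else 0)) ≤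
      (ℓ + 1) * (3 * N) := by
    intro i
    rw [Finset.sum_comm, ← sum_one_div_choose, Finset.sum_mul]
    refine Finset.sum_le_sum fun S _ => ?_
    rw [← Finset.mul_sum]
    refine mul_le_mul_of_nonneg_left ?_ (by positivity)
    rw [Finset.sum_add_distrib, ← Finset.sum_filter, ← Finset.sum_filter, Finset.sum_const,
      Finset.sum_const, nsmul_eq_mul, nsmul_eq_mul]
    have h1 := card_not_decodable_le i S
    have h2 := card_decodable_le i S
    linarith
  calc _ ≤ ∑ i : Fin ℓ, (ℓ + 1) * (3 * N) := Finset.sum_le_sum fun i _ => hi i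
    _ = _ := by simp; ring

/-- Markov's inequality for the deviation. -/
lemma card_deviation_ge {ℓ : ℕ} (hℓ : 5 ≤ ℓ) :
    ((Finset.univ.filter fun K : Matrix.GeneralLinearGroup (Fin ℓ) (ZMod 2) =>
        ¬ deviation ℓ K.1 < (ℓ : ℝ) ^ 4).card : ℝ) <
      Fintype.card (Matrix.GeneralLinearGroup (Fin ℓ) (ZMod 2)) / ℓ := by
  set N : ℝ := (Fintype.card (Matrix.GeneralLinearGroup (Fin ℓ) (ZMod 2)) : ℝ) with hN
  have hN0 : 0 < N := by rw [hN]; exact_mod_cast Fintype.card_pos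
  set B := Finset.univ.filter fun K : Matrix.GeneralLinearGroup (Fin ℓ) (ZMod 2) =>
        ¬ deviation ℓ K.1 < (ℓ : ℝ) ^ 4 with hB
  have hl : (5 : ℝ) ≤ ℓ := by exact_mod_cast hℓ
  have h1 : (B.card : ℝ) * (ℓ : ℝ) ^ 4 ≤ 3 * ℓ * (ℓ + 1) * N := by
    refine le_trans ?_ (sum_deviation_le ℓ)
    rw [← nsmul_eq_mul, ← Finset.sum_const]
    refine (Finset.sum_le_sum fun K hK => not_lt.1 (Finset.mem_filter.1 hK).2).trans ?_
    refine Finset.sum_le_sum_of_subset_of_nonneg (Finset.subset_univ _) fun K _ _ => ?_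
    unfold deviation
    positivity
  rw [lt_div_iff₀ (by linarith)]
  have h2 : 3 * ((ℓ : ℝ) + 1) < (ℓ : ℝ) ^ 2 := by nlinarith
  have h3 : ((B.card : ℝ) * ℓ) * ℓ ^ 3 < N * ℓ ^ 3 := by
    calc _ = (B.card : ℝ) * (ℓ : ℝ) ^ 4 := by ring
      _ ≤ 3 * ℓ * (ℓ + 1) * N := h1
      _ = (3 * ((ℓ : ℝ) + 1)) * (ℓ * N) := by ring
      _ < (ℓ : ℝ) ^ 2 * (ℓ * N) := by gcongr
      _ = _ := by ring
  exact lt_of_mul_lt_mul_right h3 (by positivity)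

lemma choose_card_pos {ℓ : ℕ} (S : Finset (Fin ℓ)) : (0 : ℝ) < ℓ.choose S.card := by
  exact_mod_cast Nat.choose_pos (by simpa using Finset.card_le_univ S)

/-- The terms of the deviation with fixed `i` and `|S| = s` bound the number of undecodable, and
of decodable, sets of size `s`. -/
lemma card_undec_le {ℓ : ℕ} {K : Matrix (Fin ℓ) (Fin ℓ) (ZMod 2)} {A : ℝ}
    (h : deviation ℓ K ≤ A) (i : Fin ℓ) (s : ℕ) :
    ((Finset.univ.filter fun S : Finset (Fin ℓ) => S.card = s ∧ ¬ Decodable ℓ K i S).card : ℝ) ≤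
        ℓ.choose s * (A * (2 ^ s / 2 ^ (i : ℕ))) ∧
      ((Finset.univ.filter fun S : Finset (Fin ℓ) => S.card = s ∧ Decodable ℓ K i S).card : ℝ) ≤
        ℓ.choose s * (A * (2 ^ (i : ℕ) / 2 ^ s)) := by
  have hterm : ∀ S : Finset (Fin ℓ), 0 ≤ (1 / (ℓ.choose S.card : ℝ)) *
    ((if ¬ Decodable ℓ K i S then (2 : ℝ) ^ (i : ℕ) / 2 ^ S.card else 0) +
      (if Decodable ℓ K i S then (2 : ℝ) ^ S.card / 2 ^ (i : ℕ) else 0)) := fun S => by positivity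
  have hi : ∀ T : Finset (Finset (Fin ℓ)), ∑ S ∈ T, (1 / (ℓ.choose S.card : ℝ)) *
    ((if ¬ Decodable ℓ K i S then (2 : ℝ) ^ (i : ℕ) / 2 ^ S.card else 0) +
      (if Decodable ℓ K i S then (2 : ℝ) ^ S.card / 2 ^ (i : ℕ) else 0)) ≤ A := by
    intro T
    refine (Finset.sum_le_sum_of_subset_of_nonneg (Finset.subset_univ T)
      fun S _ _ => hterm S).trans (le_trans ?_ h)
    unfold deviation
    exact Finset.single_le_sum (f := fun i : Fin ℓ => ∑ S : Finset (Fin ℓ),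
      (1 / (ℓ.choose S.card : ℝ)) *
    ((if ¬ Decodable ℓ K i S then (2 : ℝ) ^ (i : ℕ) / 2 ^ S.card else 0) +
      (if Decodable ℓ K i S then (2 : ℝ) ^ S.card / 2 ^ (i : ℕ) else 0)))
      (fun i _ => Finset.sum_nonneg fun S _ => by positivity) (Finset.mem_univ i)
  have aux : ∀ (T : Finset (Finset (Fin ℓ))) (c : ℝ), 0 < c → (∀ S ∈ T, S.card = s) →
      (T.card : ℝ) * ((1 / (ℓ.choose s : ℝ)) * c) ≤ A →
      (T.card : ℝ) ≤ ℓ.choose s * (A * c⁻¹) := by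
    intro T c hc hT hle
    rcases T.eq_empty_or_nonempty with rfl | ⟨S, hS⟩
    · have hA : 0 ≤ A := by simpa using hi ∅
      simp only [Finset.card_empty, Nat.cast_zero]
      positivity
    · have := hT S hS ▸ choose_card_pos S
      rw [← div_eq_mul_inv, ← mul_div_assoc, le_div_iff₀ hc]
      calc (T.card : ℝ) * c =
          ℓ.choose s * ((T.card : ℝ) * ((1 / (ℓ.choose s : ℝ)) * c)) := by field_simp
        _ ≤ _ := by gcongr
  constructor
  · rw [← inv_div ((2 : ℝ) ^ (i : ℕ))]
    refine aux _ _ (by positivity) (fun S hS => (Finset.mem_filter.1 hS).2.1) ?_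
    refine le_trans ?_ (hi (Finset.univ.filter fun S => S.card = s ∧ ¬ Decodable ℓ K i S))
    rw [← nsmul_eq_mul, ← Finset.sum_const]
    refine Finset.sum_le_sum fun S hS => ?_
    obtain ⟨-, h1, h2⟩ := Finset.mem_filter.1 hS
    rw [if_pos h2, if_neg h2, h1, add_zero]
  · rw [← inv_div ((2 : ℝ) ^ s)]
    refine aux _ _ (by positivity) (fun S hS => (Finset.mem_filter.1 hS).2.1) ?_
    refine le_trans ?_ (hi (Finset.univ.filter fun S => S.card = s ∧ Decodable ℓ K i S))
    rw [← nsmul_eq_mul, ← Finset.sum_const]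
    refine Finset.sum_le_sum fun S hS => ?_
    obtain ⟨-, h1, h2⟩ := Finset.mem_filter.1 hS
    rw [if_neg (not_not.2 h2), if_pos h2, h1, zero_add]

/-! ### Binomial averages -/

/-- The probability of `P` under independent erasures with probability `z`, when the fraction of
sets of size `s` in `P` is at most `min 1 (exp (a + b s)) ≤ exp (θ (a + b s))`: the exponential
moment of the binomial distribution bounds it. -/
lemma sum_erasure_le {ℓ : ℕ} (P : Finset (Fin ℓ) → Prop) [DecidablePred P] {z a b θ : ℝ} (hz0 : 0 ≤ z)
    (hz1 : z ≤ 1) (hθ0 : 0 ≤ θ) (hθ1 : θ ≤ 1)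
    (h : ∀ s, ((Finset.univ.filter fun S : Finset (Fin ℓ) => S.card = s ∧ P S).card : ℝ) ≤
      ℓ.choose s * Real.exp (a + b * s)) :
    ∑ S : Finset (Fin ℓ), (if P S then z ^ S.card * (1 - z) ^ (ℓ - S.card) else 0) ≤
      Real.exp (θ * a) * (1 - z + z * Real.exp (θ * b)) ^ ℓ := by
  have hz1' : 0 ≤ 1 - z := by linarith
  have hcnt : ∀ s, ((Finset.univ.filter fun S : Finset (Fin ℓ) => S.card = s ∧ P S).card : ℝ) ≤
      ℓ.choose s * Real.exp (θ * (a + b * s)) := by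
    intro s
    by_cases hs : 0 ≤ a + b * s
    · have h1 : ((Finset.univ.filter fun S : Finset (Fin ℓ) => S.card = s ∧ P S).card : ℝ) ≤
          ℓ.choose s := by
        have : (Finset.univ.filter fun S : Finset (Fin ℓ) => S.card = s ∧ P S) ⊆
            Finset.powersetCard s Finset.univ := by
          intro S hS
          exact Finset.mem_powersetCard.2 ⟨Finset.subset_univ _, (Finset.mem_filter.1 hS).2.1⟩
        have := Finset.card_le_card this
        rw [Finset.card_powersetCard, Finset.card_univ, Fintype.card_fin] at this
        exact_mod_cast this
      refine h1.trans (le_mul_of_one_le_right (by positivity) ?_)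
      exact Real.one_le_exp (mul_nonneg hθ0 hs)
    · refine (h s).trans ?_
      gcongr
      nlinarith
  have hsplit : ∑ S : Finset (Fin ℓ), (if P S then z ^ S.card * (1 - z) ^ (ℓ - S.card) else 0) =
      ∑ s ∈ Finset.range (ℓ + 1),
        ((Finset.univ.filter fun S : Finset (Fin ℓ) => S.card = s ∧ P S).card : ℝ) *
          (z ^ s * (1 - z) ^ (ℓ - s)) := by
    rw [← Finset.sum_fiberwise_of_maps_to (s := Finset.univ) (t := Finset.range (ℓ + 1))
      (g := Finset.card) (fun S _ => by
        simpa [Nat.lt_succ_iff] using Finset.card_le_univ S)]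
    refine Finset.sum_congr rfl fun s _ => ?_
    rw [← Finset.sum_filter, Finset.filter_filter, ← nsmul_eq_mul, ← Finset.sum_const]
    refine Finset.sum_congr rfl fun S hS => ?_
    rw [(Finset.mem_filter.1 hS).2.1]
  rw [hsplit, add_comm (1 - z), add_pow, Finset.mul_sum]
  refine Finset.sum_le_sum fun s _ => ?_
  calc _ ≤ (ℓ.choose s * Real.exp (θ * (a + b * s))) * (z ^ s * (1 - z) ^ (ℓ - s)) := by
        gcongr
        exact hcnt s
    _ = _ := by
        rw [mul_pow, ← Real.exp_nat_mul, show θ * (a + b * s) = θ * a + s * (θ * b) by ring,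
          Real.exp_add]
        ring

lemma binomial_mgf_le {ℓ : ℕ} (hℓ : 1 ≤ ℓ) {z r : ℝ} (hz0 : 0 ≤ z) (hz1 : z ≤ 1)
    (hr : r ^ 2 * ℓ = 1) : (1 - z + z * Real.exp r) ^ ℓ ≤ Real.exp (ℓ * z * r + 1) := by
  have hl : (1 : ℝ) ≤ ℓ := by exact_mod_cast hℓ
  have hr1 : |r| ≤ 1 := by
    rw [abs_le_one_iff_mul_self_le_one]
    nlinarith [sq_nonneg r]
  have he := (abs_le.1 (Real.abs_exp_sub_one_sub_id_le hr1)).2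
  have hb : 1 - z + z * Real.exp r ≤ Real.exp (z * r + r ^ 2) := by
    refine le_trans ?_ (Real.add_one_le_exp _)
    nlinarith [sq_nonneg r]
  calc _ ≤ Real.exp (z * r + r ^ 2) ^ ℓ := by
        refine pow_le_pow_left₀ ?_ hb _
        have := Real.exp_pos r
        have : 0 ≤ z * Real.exp r := by positivity
        linarith
    _ = _ := by
        rw [← Real.exp_nat_mul]
        congr 1
        linear_combination hr

lemma sum_erasure_eq_one (ℓ : ℕ) (z : ℝ) :
    ∑ S : Finset (Fin ℓ), z ^ S.card * (1 - z) ^ (ℓ - S.card) = 1 := by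
  rw [Fin.sum_pow_mul_eq_add_pow]; simp

lemma fK_nonneg {ℓ : ℕ} (K : Matrix (Fin ℓ) (Fin ℓ) (ZMod 2)) (i : Fin ℓ) {z : ℝ}
    (hz0 : 0 ≤ z) (hz1 : z ≤ 1) : 0 ≤ fK ℓ K i z := by
  have : 0 ≤ 1 - z := by linarith
  unfold fK
  positivity

lemma one_sub_fK {ℓ : ℕ} (K : Matrix (Fin ℓ) (Fin ℓ) (ZMod 2)) (i : Fin ℓ) (z : ℝ) :
    1 - fK ℓ K i z = ∑ S : Finset (Fin ℓ),
      if Decodable ℓ K i S then z ^ S.card * (1 - z) ^ (ℓ - S.card) else 0 := by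
  rw [fK, sub_eq_iff_eq_add, ← Finset.sum_add_distrib]
  refine (sum_erasure_eq_one ℓ z).symm.trans ?_
  refine Finset.sum_congr rfl fun S _ => ?_
  by_cases h : Decodable ℓ K i S <;> simp [h]

lemma fK_le_one {ℓ : ℕ} (K : Matrix (Fin ℓ) (Fin ℓ) (ZMod 2)) (i : Fin ℓ) {z : ℝ}
    (hz0 : 0 ≤ z) (hz1 : z ≤ 1) : fK ℓ K i z ≤ 1 := by
  have : 0 ≤ 1 - z := by linarith
  rw [← sub_nonneg, one_sub_fK]
  positivity

/-- Sharp threshold: for a kernel of small deviation, `f_{K,i}(z)` decays exponentially in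
`(i - ℓz)/√ℓ`, and `1 - f_{K,i}(z)` in `(ℓz - i)/√ℓ`. -/
lemma fK_sharp {ℓ : ℕ} (hℓ : 5 ≤ ℓ) (hlog : 4 * Real.logb 2 ℓ ≤ √ℓ)
    {K : Matrix (Fin ℓ) (Fin ℓ) (ZMod 2)}
    (hK : deviation ℓ K < (ℓ : ℝ) ^ 4) (i : Fin ℓ) {z : ℝ} (hz0 : 0 ≤ z) (hz1 : z ≤ 1) :
    fK ℓ K i z ≤ Real.exp (2 + (ℓ * z - i) / √ℓ) ∧
      1 - fK ℓ K i z ≤ Real.exp (2 - (ℓ * z - i) / √ℓ) := by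
  have hl : (5 : ℝ) ≤ ℓ := by exact_mod_cast hℓ
  have hs0 : 0 < √(ℓ : ℝ) := Real.sqrt_pos.2 (by linarith)
  have hl2 : 0 < Real.log 2 := Real.log_pos (by norm_num)
  have hs4 : 2 ≤ √(ℓ : ℝ) := Real.le_sqrt_of_sq_le (by linarith)
  have hss : √(ℓ : ℝ) ^ 2 = ℓ := Real.sq_sqrt (by linarith)
  have h2pow : ∀ n : ℕ, (2 : ℝ) ^ n = Real.exp (Real.log 2 * n) := by
    intro n
    rw [mul_comm, Real.exp_nat_mul, Real.exp_log (by norm_num)]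
  have hA : (ℓ : ℝ) ^ 4 = Real.exp (4 * Real.log ℓ) := by
    rw [show (4 : ℝ) = ((4 : ℕ) : ℝ) by norm_num, Real.exp_nat_mul, Real.exp_log (by linarith)]
  -- `θ` is chosen so that `2 ^ θ = exp (1 / √ℓ)`.
  set θ : ℝ := 1 / (√ℓ * Real.log 2) with hθ
  have hθ0 : 0 ≤ θ := by positivity
  have hθ1 : θ ≤ 1 := by
    rw [hθ, div_le_one (by positivity)]
    have := Real.log_two_gt_d9
    nlinarith
  have hθA : θ * (4 * Real.log ℓ) ≤ 1 := by
    have : θ * (4 * Real.log ℓ) = (4 * Real.logb 2 ℓ) / √ℓ := by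
      rw [hθ, Real.logb]; field_simp
    rw [this, div_le_one hs0]; exact hlog
  have hθl : θ * Real.log 2 = 1 / √ℓ := by rw [hθ]; field_simp
  have hr : (1 / √(ℓ : ℝ)) ^ 2 * ℓ = 1 := by
    rw [div_pow, hss]; field_simp
  constructor
  · unfold fK
    refine (sum_erasure_le (a := 4 * Real.log ℓ - Real.log 2 * i) (b := Real.log 2)
      (fun S => ¬ Decodable ℓ K i S) hz0 hz1 hθ0 hθ1 fun s => ?_).trans ?_
    · refine (card_undec_le hK.le i s).1.trans (le_of_eq ?_)
      rw [h2pow, h2pow, hA, ← Real.exp_sub, ← Real.exp_add]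
      congr 2; ring
    · rw [hθl]
      refine (mul_le_mul_of_nonneg_left (binomial_mgf_le (by omega) hz0 hz1 hr)
        (Real.exp_pos _).le).trans ?_
      rw [← Real.exp_add, Real.exp_le_exp]
      have : θ * (4 * Real.log ℓ - Real.log 2 * i) = θ * (4 * Real.log ℓ) - i / √ℓ := by
        rw [mul_sub, ← mul_assoc θ (Real.log 2), hθl]; ring
      rw [this, sub_div, mul_one_div]
      linarith
  · rw [one_sub_fK]
    refine (sum_erasure_le (a := 4 * Real.log ℓ + Real.log 2 * i) (b := - Real.log 2)
      (fun S => Decodable ℓ K i S) hz0 hz1 hθ0 hθ1 fun s => ?_).trans ?_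
    · refine (card_undec_le hK.le i s).2.trans (le_of_eq ?_)
      rw [h2pow, h2pow, hA, ← Real.exp_sub, ← Real.exp_add]
      congr 2; ring
    · rw [mul_neg, hθl]
      refine (mul_le_mul_of_nonneg_left (binomial_mgf_le (by omega) hz0 hz1
        (by rw [neg_sq]; exact hr)) (Real.exp_pos _).le).trans ?_
      rw [← Real.exp_add, Real.exp_le_exp]
      have : θ * (4 * Real.log ℓ + Real.log 2 * i) = θ * (4 * Real.log ℓ) + i / √ℓ := by
        rw [mul_add, ← mul_assoc θ (Real.log 2), hθl]; ring
      rw [this, sub_div, mul_neg, mul_one_div]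
      linarith

/-- Since `min x (1 - x) ^ α` bounds `g_α`, the value `g_α(f_{K,i}(z))` decays exponentially in
`|i - ℓz|`. -/
lemma gfun_fK_le {ℓ : ℕ} (hℓ : 5 ≤ ℓ) (hlog : 4 * Real.logb 2 ℓ ≤ √ℓ)
    {K : Matrix (Fin ℓ) (Fin ℓ) (ZMod 2)}
    (hK : deviation ℓ K < (ℓ : ℝ) ^ 4) (i : Fin ℓ) {z α : ℝ} (hz0 : 0 ≤ z) (hz1 : z ≤ 1)
    (hα0 : 0 < α) (hα1 : α < 1 / 16) :
    gfun α (fK ℓ K i z) ≤ 2 * Real.exp (-(α / √ℓ) * |(i : ℝ) - ℓ * z|) := by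
  obtain ⟨h1, h2⟩ := fK_sharp hℓ hlog hK i hz0 hz1
  have h0 := fK_nonneg K i hz0 hz1
  have h3 : 0 ≤ 1 - fK ℓ K i z := sub_nonneg.2 (fK_le_one K i hz0 hz1)
  have he : Real.exp (2 * α) ≤ 2 := by
    rw [← Real.le_log_iff_exp_le (by norm_num)]
    have := Real.log_two_gt_d9
    linarith
  have key : ∀ x y t : ℝ, 0 ≤ x → 0 ≤ y → y ≤ 1 → x ≤ Real.exp (2 + t) →
      x ^ α * y ^ α ≤ 2 * Real.exp (α * t) := by
    intro x y t hx hy hy1 hxt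
    calc x ^ α * y ^ α ≤ Real.exp (2 + t) ^ α * 1 := by
          gcongr
          exact Real.rpow_le_one hy hy1 hα0.le
      _ = Real.exp (2 * α) * Real.exp (α * t) := by
          rw [mul_one, ← Real.exp_mul, ← Real.exp_add]; ring_nf
      _ ≤ _ := by gcongr
  unfold gfun
  rcases le_total (i : ℝ) (ℓ * z) with h | h
  · rw [abs_of_nonpos (by linarith), mul_comm]
    refine (key _ _ (-((ℓ * z - i) / √ℓ)) h3 h0 (by linarith) (by rwa [← sub_eq_add_neg])).trans
      (le_of_eq ?_)
    ring_nf
  · rw [abs_of_nonneg (by linarith)]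
    refine (key _ _ ((ℓ * z - i) / √ℓ) h0 h3 (by linarith) h1).trans (le_of_eq ?_)
    ring_nf

lemma sum_exp_abs_le {ℓ : ℕ} {β y : ℝ} (hβ0 : 0 < β) (hβ1 : β ≤ 1 / 2) (hy : 0 ≤ y) :
    ∑ i : Fin ℓ, Real.exp (-β * |(i : ℝ) - y|) ≤ 4 / β := by
  set r := Real.exp (-β) with hr
  have hr1 : 1 - r ≥ β / 2 := by
    have := (abs_le.1 (Real.abs_exp_sub_one_sub_id_le (x := -β)
      (by rw [abs_neg, abs_of_pos hβ0]; linarith))).2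
    nlinarith
  have hgeo : ∀ n, ∑ k ∈ Finset.range n, r ^ k ≤ 2 / β := by
    intro n
    have h := mul_neg_geom_sum r n
    have hpos : 0 ≤ r ^ n := by positivity
    have hs : 0 ≤ ∑ k ∈ Finset.range n, r ^ k := by positivity
    rw [le_div_iff₀ hβ0]
    nlinarith
  have hrk : ∀ (k : ℕ) (x : ℝ), (k : ℝ) ≤ |x| → Real.exp (-β * |x|) ≤ r ^ k := by
    intro k x hx
    rw [hr, ← Real.exp_nat_mul, Real.exp_le_exp]
    nlinarith
  rw [Fin.sum_univ_eq_sum_range (fun i : ℕ => Real.exp (-β * |(i : ℝ) - y|)) ℓ]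
  set n := ⌊y⌋₊ with hn
  have hny : (n : ℝ) ≤ y := Nat.floor_le hy
  have hyn : y < n + 1 := Nat.lt_floor_add_one y
  calc ∑ i ∈ Finset.range ℓ, Real.exp (-β * |(i : ℝ) - y|)
      ≤ ∑ i ∈ Finset.range (n + 1 + ℓ), Real.exp (-β * |(i : ℝ) - y|) :=
        Finset.sum_le_sum_of_subset_of_nonneg (Finset.range_mono (by omega))
          fun _ _ _ => (Real.exp_pos _).le
    _ = ∑ i ∈ Finset.range (n + 1), Real.exp (-β * |((n + 1 - 1 - i : ℕ) : ℝ) - y|) +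
          ∑ k ∈ Finset.range ℓ, Real.exp (-β * |((n + 1 + k : ℕ) : ℝ) - y|) := by
        rw [Finset.sum_range_add,
          Finset.sum_range_reflect (fun i : ℕ => Real.exp (-β * |(i : ℝ) - y|)) (n + 1)]
    _ ≤ ∑ k ∈ Finset.range (n + 1), r ^ k + ∑ k ∈ Finset.range ℓ, r ^ k := by
        refine add_le_add (Finset.sum_le_sum fun k hk => hrk k _ ?_)
          (Finset.sum_le_sum fun k _ => hrk k _ ?_)
        · have hk' : k ≤ n := Nat.lt_succ_iff.1 (Finset.mem_range.1 hk)
          rw [Nat.add_sub_cancel, Nat.cast_sub hk', abs_of_nonpos (by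
            have : (0 : ℝ) ≤ k := by positivity
            linarith)]
          linarith
        · push_cast
          refine le_trans ?_ (le_abs_self _)
          linarith
    _ ≤ 2 / β + 2 / β := add_le_add (hgeo _) (hgeo _)
    _ = 4 / β := by ring

/-! ### Numerical consequences of the size condition -/

/-- The condition on `ℓ` forces `L = log₂ ℓ ≥ 16`, and gives `1 / α ≤ L` and `L ≤ ℓ ^ α`. -/
lemma size_bounds {α : ℝ} (hα0 : 0 < α) (hα1 : α < 1 / 16) {ℓ : ℕ} (hℓ : 2 ≤ ℓ)
    (hcond : Real.logb 2 ℓ / Real.logb 2 (Real.logb 2 ℓ) ≥ 1 / α) :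
    16 ≤ Real.logb 2 ℓ ∧ 1 / α ≤ Real.logb 2 ℓ ∧ Real.logb 2 ℓ ≤ (ℓ : ℝ) ^ α := by
  set L := Real.logb 2 ℓ with hL
  have hl : (2 : ℝ) ≤ ℓ := by exact_mod_cast hℓ
  have hinv : 16 < 1 / α := by rw [lt_div_iff₀ hα0]; linarith
  have hL1 : 1 ≤ L := by
    rw [hL, Real.le_logb_iff_rpow_le (by norm_num) (by linarith)]
    simpa using hl
  have hM0 : 0 ≤ Real.logb 2 L := Real.logb_nonneg (by norm_num) hL1
  have hMpos : 0 < Real.logb 2 L := by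
    refine lt_of_le_of_ne hM0 fun h => ?_
    rw [← h, div_zero] at hcond
    linarith
  set M := Real.logb 2 L with hM
  have hML : M ≤ α * L := by
    have h := (le_div_iff₀ hMpos).1 hcond
    rw [one_div_mul_eq_div, div_le_iff₀ hα0] at h
    linarith
  have hML16 : 16 * M ≤ L := by nlinarith
  have hL2M : L = 2 ^ M := by
    rw [hM, Real.rpow_logb (by norm_num) (by norm_num) (by linarith)]
  have hℓ3 : 3 ≤ ℓ := by
    by_contra h
    have h2 : ℓ = 2 := by omega
    have : L = 1 := by rw [hL, h2]; norm_num
    rw [this] at hM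
    rw [hM] at hMpos
    simp at hMpos
  have hL32 : 3 / 2 ≤ L := by
    rw [hL, Real.le_logb_iff_rpow_le (by norm_num) (by linarith)]
    have h3 : (3 : ℝ) ≤ ℓ := by exact_mod_cast hℓ3
    refine le_trans ?_ h3
    refine (pow_le_pow_iff_left₀ (by positivity) (by norm_num) two_ne_zero).1 ?_
    rw [← Real.rpow_natCast, ← Real.rpow_mul (by norm_num)]
    norm_num
  -- For `3/2 ≤ L < 16` the inequality `16 log₂ L ≤ L` fails.
  have hL16 : 16 ≤ L := by
    by_contra hlt
    push Not at hlt
    have hM1 : M < 1 := by linarith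
    have hL2 : L < 2 := by
      rw [hL2M]
      calc (2 : ℝ) ^ M < 2 ^ (1 : ℝ) := Real.rpow_lt_rpow_of_exponent_lt (by norm_num) hM1
        _ = 2 := by norm_num
    have hM2 : M ≤ 1 / 8 := by linarith
    have hM3 : 1 / 2 ≤ M := by
      rw [hM, Real.le_logb_iff_rpow_le (by norm_num) (by linarith)]
      refine le_trans ?_ hL32
      rw [← Real.sqrt_eq_rpow, Real.sqrt_le_left (by norm_num)]
      norm_num
    linarith
  refine ⟨hL16, ?_, ?_⟩
  · have hM1 : 1 ≤ M := by
      rw [hM, Real.le_logb_iff_rpow_le (by norm_num) (by linarith)]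
      norm_num; linarith
    calc 1 / α ≤ L / M := hcond
      _ ≤ L := div_le_self (by linarith) hM1
  · have hℓ2 : (ℓ : ℝ) = 2 ^ L := by
      rw [hL, Real.rpow_logb (by norm_num) (by norm_num) (by linarith)]
    rw [hℓ2, ← Real.rpow_mul (by norm_num), hL2M]
    refine Real.rpow_le_rpow_of_exponent_le (by norm_num) ?_
    rw [← hL2M]; linarith

lemma four_mul_le_sqrt {ℓ : ℕ} (hℓ : 2 ≤ ℓ) (h : 16 ≤ Real.logb 2 ℓ) :
    4 * Real.logb 2 ℓ ≤ √ℓ ∧ 5 ≤ ℓ := by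
  have hl : (2 : ℝ) ≤ ℓ := by exact_mod_cast hℓ
  set L := Real.logb 2 ℓ with hL
  have hℓ2 : (ℓ : ℝ) = 2 ^ L := by
    rw [hL, Real.rpow_logb (by norm_num) (by norm_num) (by linarith)]
  have hsq : √(ℓ : ℝ) = 2 ^ (L / 2) := by
    rw [hℓ2, Real.sqrt_eq_rpow, ← Real.rpow_mul (by norm_num)]; ring_nf
  -- Factor out `2 ^ 8 = 256` and use `exp x ≥ 1 + x` on the rest.
  have hb : 4 * L ≤ 2 ^ (L / 2) := by
    have h1 : (2 : ℝ) ^ (L / 2) = 256 * 2 ^ ((L - 16) / 2) := by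
      rw [show L / 2 = (8 : ℕ) + (L - 16) / 2 by push_cast; ring, Real.rpow_add (by norm_num),
        Real.rpow_natCast]
      norm_num
    have h2 : 1 + (L - 16) / 2 * Real.log 2 ≤ 2 ^ ((L - 16) / 2) := by
      rw [Real.rpow_def_of_pos (by norm_num), add_comm, mul_comm (Real.log 2)]
      exact Real.add_one_le_exp _
    have := Real.log_two_gt_d9
    rw [h1]
    nlinarith
  refine ⟨hsq ▸ hb, ?_⟩
  have h3 : (64 : ℝ) ≤ √ℓ := by rw [hsq]; linarith
  have h4 := Real.sq_sqrt (show (0 : ℝ) ≤ ℓ by linarith)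
  have h5 : (5 : ℝ) ≤ ℓ := by nlinarith
  exact_mod_cast h5

lemma gfun_ge {ℓ : ℕ} (hℓ : 2 ≤ ℓ) {α z : ℝ} (hα0 : 0 < α)
    (hz : z ∈ Set.Icc (1 / (ℓ : ℝ) ^ 2) (1 - 1 / (ℓ : ℝ) ^ 2)) :
    (ℓ : ℝ) ^ (-(3 * α)) ≤ gfun α z := by
  have hl : (2 : ℝ) ≤ ℓ := by exact_mod_cast hℓ
  obtain ⟨hz1, hz2⟩ := hz
  have hε0 : 0 < 1 / (ℓ : ℝ) ^ 2 := by positivity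
  have hε : (1 / (ℓ : ℝ)) ≤ 1 - 1 / (ℓ : ℝ) ^ 2 := by
    have : 0 < 1 / (ℓ : ℝ) := by positivity
    have h2 : 1 / (ℓ : ℝ) ≤ 1 / 2 := one_div_le_one_div_of_le (by norm_num) hl
    rw [← one_div_pow]
    nlinarith
  have hprod : 1 / (ℓ : ℝ) ^ 3 ≤ z * (1 - z) := by
    calc 1 / (ℓ : ℝ) ^ 3 = 1 / (ℓ : ℝ) ^ 2 * (1 / ℓ) := by field_simp
      _ ≤ 1 / (ℓ : ℝ) ^ 2 * (1 - 1 / (ℓ : ℝ) ^ 2) := by gcongr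
      _ ≤ z * (1 - z) := by nlinarith
  unfold gfun
  rw [← Real.mul_rpow (by linarith) (by linarith)]
  calc (ℓ : ℝ) ^ (-(3 * α)) = (1 / (ℓ : ℝ) ^ 3) ^ α := by
        rw [one_div, ← Real.rpow_natCast, ← Real.rpow_neg (by positivity),
          ← Real.rpow_mul (by positivity)]
        push_cast; ring_nf
    _ ≤ _ := by gcongr

/-- Kernels of small deviation satisfy the bound on `λ` at every `z` simultaneously. -/
lemma lam_lt {α : ℝ} (hα0 : 0 < α) (hα1 : α < 1 / 16) {ℓ : ℕ} (hℓ : 2 ≤ ℓ)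
    (hcond : Real.logb 2 ℓ / Real.logb 2 (Real.logb 2 ℓ) ≥ 1 / α)
    {K : Matrix (Fin ℓ) (Fin ℓ) (ZMod 2)} (hK : deviation ℓ K < (ℓ : ℝ) ^ 4)
    {z : ℝ} (hz : z ∈ Set.Icc (1 / (ℓ : ℝ) ^ 2) (1 - 1 / (ℓ : ℝ) ^ 2)) :
    lam ℓ K α z < (ℓ : ℝ) ^ (-(1 : ℝ) / 2 + 5 * α) := by
  obtain ⟨hL16, hαL, hLα⟩ := size_bounds hα0 hα1 hℓ hcond
  obtain ⟨hlog, hℓ5⟩ := four_mul_le_sqrt hℓ hL16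
  have hl : (2 : ℝ) ≤ ℓ := by exact_mod_cast hℓ
  have hg := gfun_ge hℓ hα0 hz
  have hε0 : 0 < 1 / (ℓ : ℝ) ^ 2 := by positivity
  have hz0 : 0 ≤ z := hε0.le.trans hz.1
  have hz1 : z ≤ 1 := hz.2.trans (by linarith)
  have hs1 : 1 ≤ √(ℓ : ℝ) := Real.one_le_sqrt.2 (by linarith)
  have hs0 : 0 < √(ℓ : ℝ) := by linarith
  have hsum : ∑ i : Fin ℓ, gfun α (fK ℓ K i z) ≤ 8 * (1 / α) * √ℓ := by
    calc ∑ i : Fin ℓ, gfun α (fK ℓ K i z)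
        ≤ ∑ i : Fin ℓ, 2 * Real.exp (-(α / √ℓ) * |(i : ℝ) - ℓ * z|) :=
          Finset.sum_le_sum fun i _ => gfun_fK_le hℓ5 hlog hK i hz0 hz1 hα0 hα1
      _ = 2 * ∑ i : Fin ℓ, Real.exp (-(α / √ℓ) * |(i : ℝ) - ℓ * z|) := by rw [Finset.mul_sum]
      _ ≤ 2 * (4 / (α / √ℓ)) := by
          refine mul_le_mul_of_nonneg_left (sum_exp_abs_le (by positivity) ?_ (by positivity))
            (by norm_num)
          exact (div_le_self hα0.le hs1).trans (by linarith)
      _ = _ := by field_simp; norm_num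
  have hlp : (0 : ℝ) < ℓ := by linarith
  have hgpos : 0 < gfun α z := lt_of_lt_of_le (by positivity) hg
  have h8 : 8 * (1 / α) < (ℓ : ℝ) ^ (2 * α) := by
    calc 8 * (1 / α) ≤ 8 * Real.logb 2 ℓ := by linarith
      _ < Real.logb 2 ℓ ^ 2 := by nlinarith
      _ ≤ ((ℓ : ℝ) ^ α) ^ 2 := by gcongr
      _ = (ℓ : ℝ) ^ (2 * α) := by
          rw [← Real.rpow_natCast, ← Real.rpow_mul hlp.le]; push_cast; ring_nf
  unfold lam
  rw [div_lt_iff₀ hgpos]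
  calc 1 / (ℓ : ℝ) * ∑ i : Fin ℓ, gfun α (fK ℓ K i z)
      ≤ 1 / (ℓ : ℝ) * (8 * (1 / α) * √ℓ) := by gcongr
    _ < 1 / (ℓ : ℝ) * ((ℓ : ℝ) ^ (2 * α) * √ℓ) := by gcongr
    _ = (ℓ : ℝ) ^ (-(1 : ℝ) / 2 + 5 * α) * (ℓ : ℝ) ^ (-(3 * α)) := by
        rw [one_div, ← Real.rpow_neg_one, Real.sqrt_eq_rpow, ← Real.rpow_add hlp,
          ← Real.rpow_add hlp, ← Real.rpow_add hlp]
        ring_nf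
    _ ≤ (ℓ : ℝ) ^ (-(1 : ℝ) / 2 + 5 * α) * gfun α z := by gcongr

theorem stmt6 (α : ℝ) (hα : α ∈ Set.Ioo (0 : ℝ) (1 / 16)) (ℓ : ℕ) (hℓ : 2 ≤ ℓ)
    (hcond : Real.logb 2 ℓ / Real.logb 2 (Real.logb 2 ℓ) ≥ 1 / α) :
    fracGL ℓ (fun K =>
        ∀ z ∈ Set.Icc (1 / (ℓ : ℝ) ^ 2) (1 - 1 / (ℓ : ℝ) ^ 2),
          lam ℓ (K : Matrix (Fin ℓ) (Fin ℓ) (ZMod 2)) α z <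
            (ℓ : ℝ) ^ (-(1 : ℝ) / 2 + 5 * α)) >
      1 - 1 / (ℓ : ℝ) := by
  obtain ⟨hα0, hα1⟩ := hα
  obtain ⟨hL16, -, -⟩ := size_bounds hα0 hα1 hℓ hcond
  obtain ⟨-, hℓ5⟩ := four_mul_le_sqrt hℓ hL16
  have hM := card_deviation_ge hℓ5
  have hN0 : (0 : ℝ) < Fintype.card (Matrix.GeneralLinearGroup (Fin ℓ) (ZMod 2)) := by
    exact_mod_cast Fintype.card_pos
  unfold fracGL
  rw [gt_iff_lt, lt_div_iff₀ hN0]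
  have hsplit := Finset.card_filter_add_card_filter_not (s := Finset.univ)
    (fun K : Matrix.GeneralLinearGroup (Fin ℓ) (ZMod 2) => deviation ℓ K.1 < (ℓ : ℝ) ^ 4)
  rw [Finset.card_univ] at hsplit
  have hsplit' := congrArg (Nat.cast : ℕ → ℝ) hsplit
  push_cast at hsplit'
  have hmono := Finset.card_le_card (Finset.monotone_filter_right Finset.univ
    fun (K : Matrix.GeneralLinearGroup (Fin ℓ) (ZMod 2)) _ (hK : deviation ℓ K.1 < (ℓ : ℝ) ^ 4) =>
      (fun z hz => lam_lt hα0 hα1 hℓ hcond hK hz :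
        ∀ z ∈ Set.Icc (1 / (ℓ : ℝ) ^ 2) (1 - 1 / (ℓ : ℝ) ^ 2),
          lam ℓ (K : Matrix (Fin ℓ) (Fin ℓ) (ZMod 2)) α z <
            (ℓ : ℝ) ^ (-(1 : ℝ) / 2 + 5 * α)))
  have hmono' : ((_ : ℕ) : ℝ) ≤ _ := Nat.cast_le.2 hmono
  refine lt_of_lt_of_le ?_ hmono'
  rw [sub_mul, one_mul, one_div_mul_eq_div]
  linarith

end
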